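/- arXiv:1502.06144 — 2 statements merged into one kernel-verified Lean document; each statement's English description precedes it below -/
import Mathlib

section
/- Fix k ≥ 1 and 0 < Δ < Δ_k, and for each n ≥ k let m = ⌈Δ n⌉. Then the minimax testing risk inf_ψ max( P_unif(ψ = 1), P_planted(ψ = 0) ), where the infimum runs over all functions ψ from m-tuples of k-flats of F_2^n to {0,1}, tends to 1/2 as n → ∞. -/
open scoped BigOperators Classical
open Filter Topology

abbrev F2n (n : ℕ) := Fin n → ZMod 2

def IsFlat (n k : ℕ) (W : Set (F2n n)) : Prop :=
  ∃ A : AffineSubspace (ZMod 2) (F2n n),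
    (A : Set (F2n n)) = W ∧ W.Nonempty ∧ Module.finrank (ZMod 2) A.direction = n - k

def Flat (n k : ℕ) : Type := {W : Set (F2n n) // IsFlat n k W}

noncomputable instance (n k : ℕ) : Fintype (Flat n k) := by
  unfold Flat; exact Fintype.ofFinite _

noncomputable def q0 (n k : ℕ) : Flat n k → ℝ :=
  fun _ => (Fintype.card (Flat n k) : ℝ)⁻¹

noncomputable def qx (n k : ℕ) (x : F2n n) : Flat n k → ℝ :=
  fun W => if x ∈ W.1 then 0 else (Nat.card {W : Flat n k // x ∉ W.1} : ℝ)⁻¹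

noncomputable def prob {α : Type*} [Fintype α] (p : α → ℝ) (E : Set α) : ℝ :=
  ∑ a, if a ∈ E then p a else 0

noncomputable def expect {α : Type*} [Fintype α] (p : α → ℝ) (f : α → ℝ) : ℝ :=
  ∑ a, p a * f a

noncomputable def Punif (n k m : ℕ) : (Fin m → Flat n k) → ℝ :=
  fun V => ∏ j, q0 n k (V j)

noncomputable def Pplanted (n k m : ℕ) : (Fin m → Flat n k) → ℝ :=
  fun V => ((2:ℝ)^n)⁻¹ * ∑ x : F2n n, ∏ j, qx n k x (V j)

noncomputable def Z (n k m : ℕ) (V : Fin m → Flat n k) : ℕ :=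
  Nat.card {x : F2n n // ∀ j, x ∉ (V j).1}

noncomputable def satCount (n k m : ℕ) (V : Fin m → Flat n k) (x : F2n n) : ℕ :=
  Nat.card {j : Fin m // x ∉ (V j).1}

noncomputable def maxSat (n k m : ℕ) (V : Fin m → Flat n k) : ℕ :=
  Finset.univ.sup (fun x : F2n n => satCount n k m V x)

noncomputable def qxpi (n k : ℕ) (x : F2n n) (π : ℝ) : Flat n k → ℝ :=
  fun W => (1 - π) * q0 n k W + π * qx n k x W

noncomputable def Pplantedpi (n k m : ℕ) (π : ℝ) : (Fin m → Flat n k) → ℝ :=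
  fun V => ((2:ℝ)^n)⁻¹ * ∑ x : F2n n, ∏ j, qxpi n k x π (V j)

noncomputable def DeltaK (k : ℕ) : ℝ :=
  Real.log (1/2) / Real.log (1 - ((2:ℝ)^k)⁻¹)

/-!
For any test, the two error probabilities sum to at least one minus the total variation distance
between null and planted distributions, and a test rejecting with null probability close to `1/2`
exists because the null distribution has small atoms. So the risk is `1/2` up to the largest atom
and the total variation distance, and Cauchy–Schwarz bounds the latter by the square root of the
chi-square divergence.

The second moment of the likelihood ratio is the average, over two planted points `x`, `y`, of the
`m`-th power of the one-sample overlap `∑ q_x q_y / q_0`. For `x = y` the overlap is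
`(1 - 2^{-k})⁻¹`. For `x ≠ y` it is at most one: affine automorphisms are 2-transitive, so double
counting computes the probability that a random flat contains both points, and the events
`x ∈ W` and `y ∈ W` are negatively correlated. The divergence is thus at most
`2^{-n} (1 - 2^{-k})^{-m}`, which decays exponentially exactly when `Δ < Δ_k`.
-/

section Testing

variable {α : Type*} [Fintype α] {p r : α → ℝ}

lemma prob_eq_sum_indicator (p : α → ℝ) (E : Set α) : prob p E = ∑ a, E.indicator p a := by
  simp only [prob, Set.indicator_apply]

lemma prob_coe_finset (p : α → ℝ) (s : Finset α) : prob p s = ∑ a ∈ s, p a := by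
  simp [prob]

lemma prob_univ (p : α → ℝ) : prob p Set.univ = ∑ a, p a := by
  simp [prob]

lemma prob_add_prob_compl (p : α → ℝ) (E : Set α) : prob p E + prob p Eᶜ = ∑ a, p a := by
  rw [prob_eq_sum_indicator, prob_eq_sum_indicator, ← Finset.sum_add_distrib]
  exact Finset.sum_congr rfl fun a _ => congrFun (Set.indicator_self_add_compl E p) a

lemma prob_union_add_inter (p : α → ℝ) (E F : Set α) :
    prob p (E ∪ F) + prob p (E ∩ F) = prob p E + prob p F := by
  simp only [prob_eq_sum_indicator, ← Finset.sum_add_distrib, Set.indicator_union_add_inter_apply]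

lemma apply_le_prob (hp : ∀ a, 0 ≤ p a) {E : Set α} {a : α} (ha : a ∈ E) : p a ≤ prob p E := by
  rw [prob_eq_sum_indicator]
  calc p a = E.indicator p a := (Set.indicator_of_mem ha p).symm
    _ ≤ ∑ b, E.indicator p b :=
      Finset.single_le_sum (fun b _ => Set.indicator_nonneg (fun c _ => hp c) b) (Finset.mem_univ a)

lemma exists_prob_mem_Ioc {η t : ℝ} (hη : ∀ a, p a ≤ η) (ht₀ : 0 ≤ t) (ht : t < ∑ a, p a) :
    ∃ E : Set α, prob p E ∈ Set.Ioc (t - η) t := by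
  obtain ⟨s, hst, hs_max⟩ := (Set.toFinite {s : Finset α | ∑ a ∈ s, p a ≤ t}).exists_maximal
    ⟨∅, by simpa using ht₀⟩
  obtain ⟨a, ha⟩ : ∃ a, a ∉ s := by
    by_contra! h
    exact ht.not_ge (Finset.eq_univ_of_forall h ▸ hst)
  have h_exceeds : t < ∑ b ∈ insert a s, p b := by
    by_contra! h
    exact ha (hs_max h (Finset.subset_insert a s) (Finset.mem_insert_self a s))
  rw [Finset.sum_insert ha] at h_exceeds
  refine ⟨s, ?_⟩
  rw [prob_coe_finset]
  exact ⟨by linarith [hη a], hst⟩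

/-- The minimax risk of testing the null distribution `p` against the alternative `r`: the least
possible value, over all tests, of the larger of the two error probabilities. -/
noncomputable def minimaxRisk (p r : α → ℝ) : ℝ :=
  ⨅ ψ : α → Bool, max (prob p {a | ψ a = true}) (prob r {a | ψ a = false})

lemma minimaxRisk_eq_iInf_set (p r : α → ℝ) :
    minimaxRisk p r = ⨅ E : Set α, max (prob p E) (prob r Eᶜ) := by
  refine Function.Surjective.iInf_congr (fun ψ => {a | ψ a = true})
    (fun E => ⟨fun a => decide (a ∈ E), by simp⟩) fun ψ => ?_
  congr 2
  ext a
  simp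

lemma abs_minimaxRisk_sub_half_le {δ η : ℝ} (hp : ∑ a, p a = 1) (hr : ∑ a, r a = 1)
    (hδ : ∀ E, |prob r E - prob p E| ≤ δ) (hη : ∀ a, p a ≤ η) :
    |minimaxRisk p r - 1 / 2| ≤ δ + η := by
  have hδE (E : Set α) := abs_le.1 (hδ E)
  have hrE (E : Set α) : prob r E + prob r Eᶜ = 1 := (prob_add_prob_compl r E).trans hr
  obtain ⟨E, hE_gt, hE_le⟩ := exists_prob_mem_Ioc hη one_half_pos.le (hp.symm ▸ one_half_lt_one)
  have h_lower : 1 / 2 - δ ≤ minimaxRisk p r := by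
    rw [minimaxRisk_eq_iInf_set]
    refine le_ciInf fun F => ?_
    have := le_max_left (prob p F) (prob r Fᶜ)
    have := le_max_right (prob p F) (prob r Fᶜ)
    linarith [hrE F, hδE F]
  have h_upper : minimaxRisk p r ≤ 1 / 2 + δ + η := by
    rw [minimaxRisk_eq_iInf_set]
    refine (ciInf_le (Set.finite_range _).bddBelow E).trans (max_le ?_ ?_) <;>
      linarith [hrE E, hδE E]
  rw [abs_le]
  constructor <;> linarith

/-- The chi-square divergence `χ²(r ‖ p)` of mass functions on a finite type, meaningful only when
`p` has full support since division by zero yields zero. -/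
noncomputable def chiSq (r p : α → ℝ) : ℝ :=
  ∑ a, (r a - p a) ^ 2 / p a

lemma chiSq_eq_sum_sq_div_sub_one (hp₀ : ∀ a, p a ≠ 0) (hp : ∑ a, p a = 1) (hr : ∑ a, r a = 1) :
    chiSq r p = ∑ a, r a ^ 2 / p a - 1 := by
  have h_expand (a : α) : (r a - p a) ^ 2 / p a = r a ^ 2 / p a - 2 * r a + p a := by
    field_simp [hp₀ a]
    ring
  simp only [chiSq, h_expand, Finset.sum_add_distrib, Finset.sum_sub_distrib, ← Finset.mul_sum,
    hp, hr]
  ring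

lemma abs_prob_sub_prob_le_sqrt_chiSq (hp₀ : ∀ a, 0 < p a) (hp : ∑ a, p a = 1) (E : Set α) :
    |prob r E - prob p E| ≤ √(chiSq r p) := by
  refine Real.abs_le_sqrt ?_
  calc (prob r E - prob p E) ^ 2
      = (∑ a, E.indicator (r - p) a) ^ 2 / ∑ a, p a := by
        simp only [prob_eq_sum_indicator, ← Finset.sum_sub_distrib, hp, div_one,
          Set.indicator_sub', Pi.sub_apply]
    _ ≤ ∑ a, E.indicator (r - p) a ^ 2 / p a :=
        Finset.sq_sum_div_le_sum_sq_div _ _ fun a _ => hp₀ a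
    _ ≤ chiSq r p := by
        refine Finset.sum_le_sum fun a _ => div_le_div_of_nonneg_right ?_ (hp₀ a).le
        by_cases ha : a ∈ E <;> simp [ha, sq_nonneg]

-- Squaring the mixture draws two independent points `x`, `y` from the prior `w`; given both, the
-- integral factors over the `m` independent samples.
lemma sum_sq_sum_mul_prod_div_prod {X : Type*} [Fintype X] (m : ℕ) (w : X → ℝ)
    (Q : X → α → ℝ) (q : α → ℝ) :
    ∑ V : Fin m → α, (∑ x, w x * ∏ j, Q x (V j)) ^ 2 / ∏ j, q (V j) =
      ∑ x, ∑ y, w x * w y * (∑ a, Q x a * Q y a / q a) ^ m := by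
  have h_expand (V : Fin m → α) :
      (∑ x, w x * ∏ j, Q x (V j)) ^ 2 / ∏ j, q (V j) =
        ∑ x, ∑ y, w x * w y * ∏ j, Q x (V j) * Q y (V j) / q (V j) := by
    simp only [sq, Finset.sum_mul_sum, Finset.sum_div, Finset.prod_div_distrib,
      Finset.prod_mul_distrib]
    refine Finset.sum_congr rfl fun x _ => Finset.sum_congr rfl fun y _ => ?_
    ring
  rw [Finset.sum_congr rfl fun V _ => h_expand V, Finset.sum_comm]
  simp only [Fintype.sum_pow, Finset.mul_sum]
  exact Finset.sum_congr rfl fun x _ => Finset.sum_comm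

end Testing

section AffineGeometry

variable {K V P : Type*} [DivisionRing K] [AddCommGroup V] [Module K V]

lemma exists_linearEquiv_apply_eq {v w : V} (hv : v ≠ 0) (hw : w ≠ 0) :
    ∃ g : V ≃ₗ[K] V, g v = w := by
  let ev := LinearEquiv.toSpanNonzeroSingleton K V v hv
  let ew := LinearEquiv.toSpanNonzeroSingleton K V w hw
  obtain ⟨g, hg⟩ := Submodule.exists_linearEquiv_restrict_eq (ev.symm.trans ew)
  have h_ev : (ev 1 : V) = v := one_smul K v
  have h_ew : (ew 1 : V) = w := one_smul K w
  refine ⟨g, ?_⟩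
  rw [← h_ev, ← hg, LinearEquiv.trans_apply, LinearEquiv.symm_apply_apply, h_ew]

variable [AddTorsor V P]

lemma exists_affineEquiv_apply_eq_and_apply_eq {x y x' y' : P} (h : y ≠ x) (h' : y' ≠ x') :
    ∃ e : P ≃ᵃ[K] P, e x = x' ∧ e y = y' := by
  obtain ⟨g, hg⟩ := exists_linearEquiv_apply_eq (K := K) (vsub_ne_zero.2 h) (vsub_ne_zero.2 h')
  exact ⟨(AffineEquiv.vaddConst K x).symm.trans
    (g.toAffineEquiv.trans (AffineEquiv.vaddConst K x')), by simp, by simp [hg]⟩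

lemma natCard_affineSubspace [Module.Finite K V] {A : AffineSubspace K P}
    (hA : (A : Set P).Nonempty) : Nat.card A = Nat.card K ^ Module.finrank K A.direction := by
  have : Nonempty A := hA.to_subtype
  rw [← Module.natCard_eq_pow_finrank]
  exact Nat.card_congr (Equiv.vaddConst (Classical.arbitrary A)).symm

end AffineGeometry

section Flat

variable {n k m : ℕ}

instance : Nonempty (Flat n k) := by
  obtain ⟨f, hf⟩ := exists_linearIndependent_of_le_finrank (R := ZMod 2) (M := F2n n)
    (n := n - k) (by simp)
  refine ⟨_, (Submodule.span (ZMod 2) (Set.range f)).toAffineSubspace, rfl,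
    ⟨0, Submodule.zero_mem _⟩, ?_⟩
  rw [Submodule.toAffineSubspace_direction, finrank_span_eq_card hf, Fintype.card_fin]

lemma natCard_flat_points (W : Flat n k) : Nat.card W.1 = 2 ^ (n - k) := by
  obtain ⟨_, A, rfl, hA, hd⟩ := W
  simpa [hd] using natCard_affineSubspace hA

lemma isFlat_image (e : F2n n ≃ᵃ[ZMod 2] F2n n) {W : Set (F2n n)} (hW : IsFlat n k W) :
    IsFlat n k (e '' W) := by
  obtain ⟨A, rfl, hne, hd⟩ := hW
  refine ⟨A.map (e : F2n n →ᵃ[ZMod 2] F2n n), by simp, hne.image e, ?_⟩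
  rw [AffineSubspace.map_direction, ← hd]
  exact LinearEquiv.finrank_map_eq e.linear _

lemma isFlat_image_iff (e : F2n n ≃ᵃ[ZMod 2] F2n n) {W : Set (F2n n)} :
    IsFlat n k (e '' W) ↔ IsFlat n k W :=
  ⟨fun h => by simpa [Set.image_image] using isFlat_image e.symm h, isFlat_image e⟩

/-- The action of an affine automorphism of `F_2^n` on flats by direct image; it transports the
symmetries of the space to the uniform distribution on flats. -/
def flatEquiv (e : F2n n ≃ᵃ[ZMod 2] F2n n) : Flat n k ≃ Flat n k :=
  (Equiv.Set.congr e.toEquiv).subtypeEquiv fun _ => (isFlat_image_iff e).symm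

lemma apply_mem_flatEquiv_iff (e : F2n n ≃ᵃ[ZMod 2] F2n n) (W : Flat n k) (x : F2n n) :
    e x ∈ (flatEquiv e W).1 ↔ x ∈ W.1 :=
  e.injective.mem_set_image

lemma q0_pos (W : Flat n k) : 0 < q0 n k W :=
  inv_pos.2 (Nat.cast_pos.2 Fintype.card_pos)

lemma sum_q0 (n k : ℕ) : ∑ W, q0 n k W = 1 := by
  simp [q0]

lemma prob_q0_eq_natCard_div (E : Set (Flat n k)) :
    prob (q0 n k) E = Nat.card E / Fintype.card (Flat n k) := by
  rw [prob, ← Finset.sum_filter]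
  simp [q0, Fintype.card_subtype, div_eq_mul_inv]

lemma prob_q0_apply_mem_and_apply_mem (e : F2n n ≃ᵃ[ZMod 2] F2n n) (x y : F2n n) :
    prob (q0 n k) {W | e x ∈ W.1 ∧ e y ∈ W.1} = prob (q0 n k) {W | x ∈ W.1 ∧ y ∈ W.1} := by
  unfold prob
  rw [← Equiv.sum_comp (flatEquiv e)]
  congr! 2 with W
  exact and_congr (apply_mem_flatEquiv_iff e W x) (apply_mem_flatEquiv_iff e W y)

lemma sum_prob_mem_and_mem (p : Flat n k → ℝ) (E : Set (Flat n k)) :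
    ∑ y, prob p {W | W ∈ E ∧ y ∈ W.1} = 2 ^ (n - k) * prob p E := by
  simp only [prob, Finset.mul_sum]
  rw [Finset.sum_comm]
  refine Finset.sum_congr rfl fun W _ => ?_
  have h_card : (Nat.card W.1 : ℝ) = 2 ^ (n - k) := by exact_mod_cast natCard_flat_points W
  rw [← h_card]
  by_cases hW : W ∈ E <;> simp [hW, Finset.sum_ite, Fintype.card_subtype]

lemma prob_q0_mem (hkn : k ≤ n) (x : F2n n) : prob (q0 n k) {W | x ∈ W.1} = (2 ^ k)⁻¹ := by
  have h_const (y : F2n n) : prob (q0 n k) {W | y ∈ W.1} = prob (q0 n k) {W | x ∈ W.1} := by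
    simpa using prob_q0_apply_mem_and_apply_mem (k := k)
      (AffineEquiv.constVAdd (ZMod 2) (F2n n) (y - x)) x x
  have h_sum : ∑ y : F2n n, prob (q0 n k) {W | y ∈ W.1} = 2 ^ (n - k) := by
    simpa [prob_univ, sum_q0] using sum_prob_mem_and_mem (q0 n k) Set.univ
  simp only [h_const, Finset.sum_const, Finset.card_univ, Fintype.card_fun, ZMod.card,
    Fintype.card_fin, nsmul_eq_mul, pow_sub₀ (2 : ℝ) two_ne_zero hkn] at h_sum
  push_cast at h_sum
  exact mul_left_cancel₀ (by positivity) h_sum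

lemma q0_le (hkn : k ≤ n) (W : Flat n k) : q0 n k W ≤ (2 ^ k)⁻¹ := by
  obtain ⟨_, _, ⟨x, hx⟩, _⟩ := W.2
  rw [← prob_q0_mem hkn x]
  exact apply_le_prob (fun W => (q0_pos W).le) hx

lemma prob_q0_mem_and_mem (hkn : k ≤ n) {x y : F2n n} (hxy : y ≠ x) :
    (2 ^ n - 1) * prob (q0 n k) {W | x ∈ W.1 ∧ y ∈ W.1} = (2 ^ k)⁻¹ * (2 ^ (n - k) - 1) := by
  have h_const (z : F2n n) (hz : z ∈ Finset.univ.erase x) :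
      prob (q0 n k) {W | x ∈ W.1 ∧ z ∈ W.1} = prob (q0 n k) {W | x ∈ W.1 ∧ y ∈ W.1} := by
    obtain ⟨e, hex, hey⟩ :=
      exists_affineEquiv_apply_eq_and_apply_eq (K := ZMod 2) hxy (Finset.ne_of_mem_erase hz)
    simpa [hex, hey] using prob_q0_apply_mem_and_apply_mem (k := k) e x y
  have h_sum : ∑ z, prob (q0 n k) {W | x ∈ W.1 ∧ z ∈ W.1} = 2 ^ (n - k) * (2 ^ k)⁻¹ := by
    rw [← prob_q0_mem hkn x]
    exact sum_prob_mem_and_mem (q0 n k) {W | x ∈ W.1}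
  rw [← Finset.add_sum_erase _ _ (Finset.mem_univ x), Finset.sum_congr rfl h_const] at h_sum
  simp only [and_self, prob_q0_mem hkn, Finset.sum_const, Finset.mem_univ, Finset.card_erase_of_mem,
    Finset.card_univ, Fintype.card_fun, ZMod.card, Fintype.card_fin, nsmul_eq_mul] at h_sum
  rw [Nat.cast_sub Nat.one_le_two_pow] at h_sum
  push_cast at h_sum
  linarith

lemma prob_q0_mem_and_mem_le (hkn : k ≤ n) {x y : F2n n} (hxy : y ≠ x) :
    prob (q0 n k) {W | x ∈ W.1 ∧ y ∈ W.1} ≤ ((2 ^ k)⁻¹) ^ 2 := by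
  have hn : n ≠ 0 := by
    rintro rfl
    exact hxy (Subsingleton.elim y x)
  have h2n : (0 : ℝ) < 2 ^ n - 1 := sub_pos.2 (one_lt_pow₀ one_lt_two hn)
  have h2k : ((2 : ℝ) ^ k)⁻¹ ≤ 1 := inv_le_one_of_one_le₀ (one_le_pow₀ one_le_two)
  refine le_of_mul_le_mul_left ?_ h2n
  calc (2 ^ n - 1) * prob (q0 n k) {W | x ∈ W.1 ∧ y ∈ W.1}
      = (2 ^ k)⁻¹ * (2 ^ n * (2 ^ k)⁻¹ - 1) := by
        rw [prob_q0_mem_and_mem hkn hxy, pow_sub₀ (2 : ℝ) two_ne_zero hkn]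
    _ ≤ (2 ^ k)⁻¹ * (2 ^ n * (2 ^ k)⁻¹ - (2 ^ k)⁻¹) := by gcongr
    _ = (2 ^ n - 1) * ((2 ^ k)⁻¹) ^ 2 := by ring

lemma prob_q0_notMem (hkn : k ≤ n) (x : F2n n) :
    prob (q0 n k) {W | x ∉ W.1} = 1 - (2 ^ k)⁻¹ := by
  rw [← prob_q0_mem hkn x, ← sum_q0 n k, ← prob_add_prob_compl (q0 n k) {W | x ∈ W.1}]
  exact (add_sub_cancel_left _ _).symm

lemma prob_q0_notMem_and_notMem_le (hkn : k ≤ n) {x y : F2n n} (hxy : y ≠ x) :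
    prob (q0 n k) {W | x ∉ W.1 ∧ y ∉ W.1} ≤ (1 - (2 ^ k)⁻¹) ^ 2 := by
  have h_compl : {W : Flat n k | x ∉ W.1 ∧ y ∉ W.1} = ({W | x ∈ W.1} ∪ {W | y ∈ W.1})ᶜ := by
    ext W
    simp
  have h_union := prob_union_add_inter (q0 n k) {W | x ∈ W.1} {W | y ∈ W.1}
  have h_total := prob_add_prob_compl (q0 n k) ({W | x ∈ W.1} ∪ {W | y ∈ W.1})
  have h_inter : prob (q0 n k) ({W | x ∈ W.1} ∩ {W | y ∈ W.1}) ≤ ((2 ^ k)⁻¹) ^ 2 :=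
    prob_q0_mem_and_mem_le hkn hxy
  rw [prob_q0_mem hkn, prob_q0_mem hkn] at h_union
  rw [sum_q0, ← h_compl] at h_total
  linarith

lemma one_sub_inv_two_pow_pos (hk : 1 ≤ k) : (0 : ℝ) < 1 - (2 ^ k)⁻¹ :=
  sub_pos.2 (inv_lt_one_of_one_lt₀ (one_lt_pow₀ one_lt_two (Nat.one_le_iff_ne_zero.1 hk)))

lemma qx_eq_ite (hkn : k ≤ n) (x : F2n n) (W : Flat n k) :
    qx n k x W = if x ∉ W.1 then q0 n k W / (1 - (2 ^ k)⁻¹) else 0 := by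
  have h_card : (1 - (2 ^ k)⁻¹ : ℝ) =
      Nat.card {W : Flat n k // x ∉ W.1} / Fintype.card (Flat n k) := by
    rw [← prob_q0_notMem hkn x]
    exact prob_q0_eq_natCard_div _
  have h_ne : (Fintype.card (Flat n k) : ℝ)⁻¹ ≠ 0 := (q0_pos W).ne'
  rw [h_card, div_eq_mul_inv (Nat.card _ : ℝ), q0, div_mul_cancel_right₀ h_ne, qx, ite_not]

lemma sum_qx (hk : 1 ≤ k) (hkn : k ≤ n) (x : F2n n) : ∑ W, qx n k x W = 1 := by
  calc ∑ W, qx n k x W = prob (q0 n k) {W | x ∉ W.1} / (1 - (2 ^ k)⁻¹) := by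
        simp only [qx_eq_ite hkn, prob, Finset.sum_div, Set.mem_ofPred_eq, ite_div, zero_div]
    _ = 1 := by rw [prob_q0_notMem hkn, div_self (one_sub_inv_two_pow_pos hk).ne']

lemma sum_qx_mul_qx_div_q0 (hkn : k ≤ n) (x y : F2n n) :
    ∑ W, qx n k x W * qx n k y W / q0 n k W =
      prob (q0 n k) {W | x ∉ W.1 ∧ y ∉ W.1} / (1 - (2 ^ k)⁻¹) ^ 2 := by
  rw [prob, Finset.sum_div]
  refine Finset.sum_congr rfl fun W _ => ?_
  have h_scale (c : ℝ) : q0 n k W / c * (q0 n k W / c) / q0 n k W = q0 n k W / c ^ 2 := by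
    have := q0_pos W
    field_simp
  rw [qx_eq_ite hkn, qx_eq_ite hkn]
  by_cases hx : x ∈ W.1 <;> by_cases hy : y ∈ W.1 <;> simp [hx, hy, h_scale]

lemma sum_qx_mul_qx_div_q0_self (hkn : k ≤ n) (x : F2n n) :
    ∑ W, qx n k x W * qx n k x W / q0 n k W = (1 - (2 ^ k)⁻¹)⁻¹ := by
  simp only [sum_qx_mul_qx_div_q0 hkn, and_self, prob_q0_notMem hkn]
  rw [sq, div_self_mul_self']

lemma sum_qx_mul_qx_div_q0_le_one (hkn : k ≤ n) {x y : F2n n}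
    (hxy : y ≠ x) : ∑ W, qx n k x W * qx n k y W / q0 n k W ≤ 1 := by
  rw [sum_qx_mul_qx_div_q0 hkn]
  exact div_le_one_of_le₀ (prob_q0_notMem_and_notMem_le hkn hxy) (sq_nonneg _)

lemma qx_nonneg (x : F2n n) (W : Flat n k) : 0 ≤ qx n k x W := by
  unfold qx
  positivity

lemma Punif_pos (V : Fin m → Flat n k) : 0 < Punif n k m V :=
  Finset.prod_pos fun j _ => q0_pos (V j)

lemma Punif_le (hkn : k ≤ n) (V : Fin m → Flat n k) : Punif n k m V ≤ ((2 ^ k)⁻¹) ^ m := by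
  simpa [Punif] using Finset.prod_le_prod (s := Finset.univ)
    (fun j _ => (q0_pos (V j)).le) (fun j _ => q0_le hkn (V j))

lemma sum_Punif (n k m : ℕ) : ∑ V, Punif n k m V = 1 := by
  simp only [Punif, ← Fintype.sum_pow, sum_q0, one_pow]

lemma sum_Pplanted (hk : 1 ≤ k) (hkn : k ≤ n) : ∑ V, Pplanted n k m V = 1 := by
  unfold Pplanted
  rw [← Finset.mul_sum, Finset.sum_comm]
  simp [← Fintype.sum_pow, sum_qx hk hkn]

lemma sum_Pplanted_sq_div_Punif (n k m : ℕ) :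
    ∑ V, Pplanted n k m V ^ 2 / Punif n k m V =
      ∑ x : F2n n, ∑ y : F2n n, (2 ^ n)⁻¹ * (2 ^ n)⁻¹ *
        (∑ W, qx n k x W * qx n k y W / q0 n k W) ^ m := by
  simp only [Pplanted, Punif, Finset.mul_sum]
  exact sum_sq_sum_mul_prod_div_prod m _ (qx n k) (q0 n k)

lemma chiSq_Pplanted_Punif_le (hk : 1 ≤ k) (hkn : k ≤ n) :
    chiSq (Pplanted n k m) (Punif n k m) ≤ (2⁻¹) ^ n * ((1 - (2 ^ k)⁻¹)⁻¹) ^ m := by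
  set b : ℝ := ((1 - (2 ^ k)⁻¹)⁻¹) ^ m
  have h_overlap (x y : F2n n) :
      (∑ W, qx n k x W * qx n k y W / q0 n k W) ^ m ≤ 1 + if x = y then b else 0 := by
    split_ifs with hxy
    · subst hxy
      rw [sum_qx_mul_qx_div_q0_self hkn]
      exact le_add_of_nonneg_left zero_le_one
    · rw [add_zero]
      refine pow_le_one₀ (Finset.sum_nonneg fun W _ => ?_)
        (sum_qx_mul_qx_div_q0_le_one hkn (Ne.symm hxy))
      exact div_nonneg (mul_nonneg (qx_nonneg x W) (qx_nonneg y W)) (q0_pos W).le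
  rw [chiSq_eq_sum_sq_div_sub_one (fun V => (Punif_pos V).ne') (sum_Punif n k m)
    (sum_Pplanted hk hkn), sub_le_iff_le_add, sum_Pplanted_sq_div_Punif]
  calc ∑ x : F2n n, ∑ y : F2n n, ((2 : ℝ) ^ n)⁻¹ * (2 ^ n)⁻¹ *
        (∑ W, qx n k x W * qx n k y W / q0 n k W) ^ m
      ≤ ∑ x : F2n n, ∑ y : F2n n, ((2 : ℝ) ^ n)⁻¹ * (2 ^ n)⁻¹ * (1 + if x = y then b else 0) := by
        gcongr with x _ y _
        exact h_overlap x y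
    _ = (2⁻¹) ^ n * b + 1 := by
        simp only [← Finset.mul_sum, Finset.sum_add_distrib, Finset.sum_ite_eq, Finset.mem_univ,
          if_true, Finset.sum_const, Finset.card_univ, Fintype.card_fun, ZMod.card,
          Fintype.card_fin, nsmul_eq_mul, Nat.cast_pow, Nat.cast_ofNat, inv_pow]
        field_simp
        ring

theorem abs_minimaxRisk_Punif_Pplanted_sub_half_le (hk : 1 ≤ k) (hkn : k ≤ n) :
    |minimaxRisk (Punif n k m) (Pplanted n k m) - 1 / 2| ≤
      √((2⁻¹) ^ n * ((1 - (2 ^ k)⁻¹)⁻¹) ^ m) + ((2 ^ k)⁻¹) ^ m :=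
  abs_minimaxRisk_sub_half_le (sum_Punif n k m) (sum_Pplanted hk hkn)
    (fun E => (abs_prob_sub_prob_le_sqrt_chiSq Punif_pos (sum_Punif n k m) E).trans
      (Real.sqrt_le_sqrt (chiSq_Pplanted_Punif_le hk hkn)))
    (Punif_le hkn)

end Flat

section Asymptotics

lemma tendsto_pow_mul_pow_natCeil {a b c : ℝ} (ha : 0 ≤ a) (hb : 1 ≤ b) (hc : 0 ≤ c)
    (habc : a * b ^ c < 1) :
    Tendsto (fun n : ℕ => a ^ n * b ^ ⌈c * n⌉₊) atTop (𝓝 0) := by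
  have hb₀ : 0 < b := zero_lt_one.trans_le hb
  have h_geom : Tendsto (fun n : ℕ => (a * b ^ c) ^ n * b) atTop (𝓝 0) := by
    simpa using (tendsto_pow_atTop_nhds_zero_of_lt_one (by positivity) habc).mul_const b
  refine squeeze_zero (fun n => by positivity) (fun n => ?_) h_geom
  calc a ^ n * b ^ ⌈c * n⌉₊
      = a ^ n * b ^ (⌈c * n⌉₊ : ℝ) := by rw [Real.rpow_natCast]
    _ ≤ a ^ n * b ^ (c * n + 1) := by
        gcongr
        exact (Nat.ceil_lt_add_one (by positivity)).le
    _ = (a * b ^ c) ^ n * b := by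
        rw [Real.rpow_add_one hb₀.ne', Real.rpow_mul_natCast hb₀.le, mul_pow, mul_assoc]

lemma half_mul_rpow_lt_one_of_lt_DeltaK {k : ℕ} (hk : 1 ≤ k) {Δ : ℝ} (hΔ : Δ < DeltaK k) :
    2⁻¹ * ((1 - (2 ^ k)⁻¹)⁻¹) ^ Δ < (1 : ℝ) := by
  have hq₀ := one_sub_inv_two_pow_pos hk
  have h_log : Real.log (1 - (2 ^ k)⁻¹) < 0 :=
    Real.log_neg hq₀ (sub_lt_self 1 (by positivity))
  rw [DeltaK, lt_div_iff_of_neg h_log, one_div, Real.log_inv] at hΔ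
  rw [← Real.log_neg_iff (by positivity), Real.log_mul (by norm_num) (by positivity),
    Real.log_rpow (inv_pos.2 hq₀), Real.log_inv, Real.log_inv]
  linarith

end Asymptotics

theorem stmt10 (k : ℕ) (hk : 1 ≤ k) (Δ : ℝ) (hΔ : 0 < Δ) (hΔk : Δ < DeltaK k) :
    Tendsto (fun n : ℕ =>
        ⨅ ψ : (Fin ⌈Δ * (n:ℝ)⌉₊ → Flat n k) → Bool,
          max (prob (Punif n k ⌈Δ * (n:ℝ)⌉₊) {V | ψ V = true})
              (prob (Pplanted n k ⌈Δ * (n:ℝ)⌉₊) {V | ψ V = false}))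
      atTop (nhds (1/2)) := by
  change Tendsto (fun n : ℕ =>
    minimaxRisk (Punif n k ⌈Δ * n⌉₊) (Pplanted n k ⌈Δ * n⌉₊)) atTop (𝓝 (1 / 2))
  have h_inv : (1 : ℝ) ≤ (1 - (2 ^ k)⁻¹)⁻¹ :=
    (one_le_inv₀ (one_sub_inv_two_pow_pos hk)).2 (sub_le_self 1 (by positivity))
  have h_chiSq : Tendsto (fun n : ℕ => (2⁻¹ : ℝ) ^ n * ((1 - (2 ^ k)⁻¹)⁻¹) ^ ⌈Δ * n⌉₊)
      atTop (𝓝 0) :=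
    tendsto_pow_mul_pow_natCeil (by norm_num) h_inv hΔ.le (half_mul_rpow_lt_one_of_lt_DeltaK hk hΔk)
  have h_ceil : Tendsto (fun n : ℕ => ⌈Δ * (n : ℝ)⌉₊) atTop atTop :=
    tendsto_nat_ceil_atTop.comp (tendsto_natCast_atTop_atTop.const_mul_atTop hΔ)
  have h_atom : Tendsto (fun n : ℕ => ((2 ^ k)⁻¹ : ℝ) ^ ⌈Δ * n⌉₊) atTop (𝓝 0) :=
    (tendsto_pow_atTop_nhds_zero_of_lt_one (by positivity)
      (sub_pos.1 (one_sub_inv_two_pow_pos hk))).comp h_ceil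
  have h_bound := h_chiSq.sqrt.add h_atom
  rw [Real.sqrt_zero, add_zero] at h_bound
  refine tendsto_iff_dist_tendsto_zero.2
    (squeeze_zero' (.of_forall fun _ => dist_nonneg) ?_ h_bound)
  filter_upwards [eventually_ge_atTop k] with n hkn
  exact abs_minimaxRisk_Punif_Pplanted_sub_half_le hk hkn
end

section
/- Let 1 ≤ k ≤ n, let U ⊆ Fun be the F_2-linear span of the monomial functions x ↦ Π_{s ∈ S} x_s over subsets S ⊆ {1,…,n} with |S| ≤ k, and let N_k := Σ_{i=0}^k C(n,i). Note that the indicator function 1_W of any k-flat W lies in U, and const 1 ∈ U. Let V = (V_1,…,V_m) be m i.i.d. uniform k-flats of F_2^n (law P_unif). Then the probability that there exists an F_2-linear functional φ : U → F_2 with φ(const 1) = 1 and φ(1_{V_j}) = 0 for all j ∈ [m] is at most 2^{N_k} (1 − 2^{−k})^m. -/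
open scoped BigOperators Classical
open Filter Topology

def monomialSpan (n k : ℕ) : Submodule (ZMod 2) (F2n n → ZMod 2) :=
  Submodule.span (ZMod 2)
    {f : F2n n → ZMod 2 | ∃ S : Finset (Fin n), S.card ≤ k ∧ f = fun x => ∏ s ∈ S, x s}

/-!
Let `U` be a space of functions `F₂ⁿ → F₂` containing `1` and the indicators of all `k`-flats, and
let `φ` be a functional on `U` with `φ 1 = 1`. The `2 ^ k` cosets of a subspace of codimension `k`
partition `F₂ⁿ`, so their indicators sum to `1` and `φ` cannot vanish on all of them. Hence a
uniform `k`-flat has an indicator in the kernel of `φ` with probability at most `1 - 2 ^ (-k)`, and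
`m` independent ones do with probability at most `(1 - 2 ^ (-k)) ^ m`. A union bound over the at
most `2 ^ dim U` functionals concludes.
-/

section FiniteProbability

variable {α : Type*} [Fintype α]

lemma prob_const (c : ℝ) (E : Set α) : prob (fun _ => c) E = E.ncard * c := by
  simp only [prob, ← Finset.sum_filter, Finset.sum_const, nsmul_eq_mul,
    Set.ncard_eq_toFinset_card', Set.filter_mem_univ_eq_toFinset]

lemma prob_nonneg {p : α → ℝ} (hp : 0 ≤ p) (E : Set α) : 0 ≤ prob p E :=
  Finset.sum_nonneg fun a _ => ite_nonneg (hp a) le_rfl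

lemma prob_iUnion_le {ι : Type*} [Fintype ι] {p : α → ℝ} (hp : 0 ≤ p) (E : ι → Set α) :
    prob p (⋃ i, E i) ≤ ∑ i, prob p (E i) := by
  have term_nonneg (i : ι) (a : α) : 0 ≤ if a ∈ E i then p a else 0 := ite_nonneg (hp a) le_rfl
  calc prob p (⋃ i, E i) ≤ ∑ a, ∑ i, if a ∈ E i then p a else 0 := by
        refine Finset.sum_le_sum fun a _ => ?_
        split_ifs with ha
        · obtain ⟨i, hi⟩ := Set.mem_iUnion.1 ha
          simpa only [if_pos hi] using
            Finset.single_le_sum (fun i _ => term_nonneg i a) (Finset.mem_univ i)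
        · exact Finset.sum_nonneg fun i _ => term_nonneg i a
    _ = ∑ i, prob p (E i) := Finset.sum_comm

lemma prob_prod_pi {ι : Type*} [Fintype ι] [DecidableEq ι] {β : ι → Type*} [∀ i, Fintype (β i)]
    (p : ∀ i, β i → ℝ) (E : ∀ i, Set (β i)) :
    prob (fun a => ∏ i, p i (a i)) (Set.univ.pi E) = ∏ i, prob (p i) (E i) := by
  simp only [prob, Fintype.prod_sum, Set.mem_univ_pi, Finset.prod_ite_zero, Finset.mem_univ,
    true_imp_iff]

lemma prob_prod_exists_forall_mem_le {ι κ : Type*} [Fintype ι] [DecidableEq ι] [Fintype κ]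
    {p : α → ℝ} (hp : 0 ≤ p) {E : κ → Set α} {r : ℝ} (hr : ∀ c, prob p (E c) ≤ r) :
    prob (fun a : ι → α => ∏ i, p (a i)) {a | ∃ c, ∀ i, a i ∈ E c}
      ≤ Fintype.card κ * r ^ Fintype.card ι := by
  have union_eq : {a : ι → α | ∃ c, ∀ i, a i ∈ E c} = ⋃ c, Set.univ.pi fun _ => E c := by
    ext a
    simp only [Set.mem_ofPred_eq, Set.mem_iUnion, Set.mem_univ_pi]
  calc prob (fun a : ι → α => ∏ i, p (a i)) {a | ∃ c, ∀ i, a i ∈ E c}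
      ≤ ∑ c, prob (fun a : ι → α => ∏ i, p (a i)) (Set.univ.pi fun _ => E c) := by
        rw [union_eq]
        exact prob_iUnion_le (fun a => Finset.prod_nonneg fun i _ => hp (a i)) _
    _ = ∑ c, prob p (E c) ^ Fintype.card ι := by
        simp only [prob_prod_pi (fun _ => p), Finset.prod_const, Finset.card_univ]
    _ ≤ ∑ _c : κ, r ^ Fintype.card ι :=
        Finset.sum_le_sum fun c _ => pow_le_pow_left₀ (prob_nonneg hp _) (hr c) _
    _ = Fintype.card κ * r ^ Fintype.card ι := by
        rw [Finset.sum_const, nsmul_eq_mul, Finset.card_univ]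

end FiniteProbability

section Fibers

variable {α β : Type*}

lemma sum_indicator_preimage_singleton [Fintype β] {R : Type*} [AddCommMonoidWithOne R]
    (f : α → β) : ∑ b, (f ⁻¹' {b}).indicator (1 : α → R) = 1 := by
  ext a
  simp [Finset.sum_apply, Set.indicator_apply]

lemma exists_map_indicator_preimage_singleton_ne_zero [Finite β] {R M : Type*}
    [Semiring R] [AddCommMonoid M] [Module R M] {U : Submodule R (α → R)} (φ : U →ₗ[R] M)
    (f : α → β) (hf : ∀ b, (f ⁻¹' {b}).indicator 1 ∈ U) (hone : 1 ∈ U) (hφ : φ ⟨1, hone⟩ ≠ 0) :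
    ∃ b, φ ⟨(f ⁻¹' {b}).indicator 1, hf b⟩ ≠ 0 := by
  have := Fintype.ofFinite β
  have sum_eq : ∑ b, (⟨(f ⁻¹' {b}).indicator 1, hf b⟩ : U) = ⟨1, hone⟩ := by
    ext1
    rw [AddSubmonoidClass.coe_finsetSum]
    exact sum_indicator_preimage_singleton f
  rw [← sum_eq, map_sum] at hφ
  obtain ⟨b, -, hb⟩ := Finset.exists_ne_zero_of_sum_ne_zero hφ
  exact ⟨b, hb⟩

end Fibers

lemma coe_affineSubspace_mk'_eq_preimage_mkQ {K E : Type*} [Ring K] [AddCommGroup E] [Module K E]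
    (x : E) (D : Submodule K E) :
    (AffineSubspace.mk' x D : Set E) = D.mkQ ⁻¹' {D.mkQ x} := by
  ext y
  simp only [SetLike.mem_coe, AffineSubspace.mem_mk', Set.mem_preimage, Set.mem_singleton_iff,
    Submodule.mkQ_apply, Submodule.Quotient.eq, vsub_eq_sub]

section Flats

variable {n k : ℕ}

/-- The possible directions of a `k`-flat: the linear subspaces of `F₂ⁿ` of dimension `n - k`. -/
abbrev FlatDirection (n k : ℕ) :=
  {D : Submodule (ZMod 2) (F2n n) // Module.finrank (ZMod 2) D = n - k}

lemma isFlat_preimage_mkQ (D : FlatDirection n k) (c : F2n n ⧸ D.1) :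
    IsFlat n k (D.1.mkQ ⁻¹' {c}) := by
  obtain ⟨x, rfl⟩ := D.1.mkQ_surjective c
  refine ⟨AffineSubspace.mk' x D.1, coe_affineSubspace_mk'_eq_preimage_mkQ x D.1, ⟨x, rfl⟩, ?_⟩
  rw [AffineSubspace.direction_mk', D.2]

/-- The `k`-flat given by a coset `c` of the subspace `D`, as the set of points of `F₂ⁿ` with
class `c`; every `k`-flat is obtained exactly once in this way. -/
def Flat.ofCoset (D : FlatDirection n k) (c : F2n n ⧸ D.1) : Flat n k :=
  ⟨D.1.mkQ ⁻¹' {c}, isFlat_preimage_mkQ D c⟩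

lemma Flat.ofCoset_injective_sigma :
    Function.Injective fun s : Σ D : FlatDirection n k, F2n n ⧸ D.1 => Flat.ofCoset s.1 s.2 := by
  rintro ⟨⟨D, hD⟩, c⟩ ⟨⟨D', hD'⟩, c'⟩ h
  obtain ⟨x, rfl⟩ := D.mkQ_surjective c
  have fiber_eq : D.mkQ ⁻¹' {D.mkQ x} = D'.mkQ ⁻¹' {c'} := congrArg Subtype.val h
  obtain rfl : D'.mkQ x = c' := fiber_eq.subset rfl
  simp only [← coe_affineSubspace_mk'_eq_preimage_mkQ] at fiber_eq
  obtain rfl : D = D' := by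
    simpa only [AffineSubspace.direction_mk'] using
      congrArg AffineSubspace.direction (SetLike.coe_injective fiber_eq)
  rfl

lemma Flat.exists_ofCoset_eq (W : Flat n k) : ∃ D c, Flat.ofCoset D c = W := by
  obtain ⟨-, A, rfl, ⟨x, hx⟩, hA⟩ := W
  refine ⟨⟨A.direction, hA⟩, A.direction.mkQ x, Subtype.ext ?_⟩
  exact (coe_affineSubspace_mk'_eq_preimage_mkQ x A.direction).symm.trans
    (congrArg _ (AffineSubspace.mk'_eq hx))

lemma card_quotient_flatDirection (hkn : k ≤ n) (D : FlatDirection n k) :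
    Fintype.card (F2n n ⧸ D.1) = 2 ^ k := by
  have finrank_quotient : Module.finrank (ZMod 2) (F2n n ⧸ D.1) = k := by
    rw [Submodule.finrank_quotient, Module.finrank_fin_fun, D.2, Nat.sub_sub_self hkn]
  rw [Module.card_eq_pow_finrank (K := ZMod 2), ZMod.card, finrank_quotient]

lemma card_flat (hkn : k ≤ n) :
    Fintype.card (Flat n k) = Fintype.card (FlatDirection n k) * 2 ^ k := by
  have surjective (W : Flat n k) :
      ∃ s : Σ D : FlatDirection n k, F2n n ⧸ D.1, Flat.ofCoset s.1 s.2 = W := by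
    simpa only [Sigma.exists] using W.exists_ofCoset_eq
  rw [← Fintype.card_of_bijective ⟨Flat.ofCoset_injective_sigma, surjective⟩, Fintype.card_sigma]
  simp only [card_quotient_flatDirection hkn, Finset.sum_const, Finset.card_univ, smul_eq_mul]

lemma card_flatDirection_le_ncard {T : Set (Flat n k)} (hT : ∀ D, ∃ c, Flat.ofCoset D c ∈ T) :
    Fintype.card (FlatDirection n k) ≤ T.ncard := by
  choose c hc using hT
  have injective : Function.Injective fun D => (⟨Flat.ofCoset D (c D), hc D⟩ : T) := fun D D' h =>
    congrArg Sigma.fst <|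
      Flat.ofCoset_injective_sigma (a₁ := ⟨D, c D⟩) (a₂ := ⟨D', c D'⟩) (congrArg Subtype.val h)
  rw [← Nat.card_coe_set_eq, ← Nat.card_eq_fintype_card]
  exact Nat.card_le_card_of_injective _ injective

lemma one_sub_inv_two_pow_nonneg (k : ℕ) : 0 ≤ 1 - ((2 : ℝ) ^ k)⁻¹ :=
  sub_nonneg.2 (inv_le_one_of_one_le₀ (one_le_pow₀ one_le_two))

lemma q0_nonneg : 0 ≤ q0 n k := fun _ => inv_nonneg.2 (Nat.cast_nonneg _)

lemma prob_q0_le_of_forall_exists_ofCoset_notMem (hkn : k ≤ n) {S : Set (Flat n k)}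
    (hS : ∀ D, ∃ c, Flat.ofCoset D c ∉ S) : prob (q0 n k) S ≤ 1 - ((2 : ℝ) ^ k)⁻¹ := by
  have compl_large : (Fintype.card (Flat n k) : ℝ) ≤ Sᶜ.ncard * 2 ^ k := by
    rw [card_flat hkn]
    exact_mod_cast Nat.mul_le_mul_right _ (card_flatDirection_le_ncard hS)
  have ncard_add : (S.ncard + Sᶜ.ncard : ℝ) = Fintype.card (Flat n k) := by
    rw [← Nat.card_eq_fintype_card]
    exact_mod_cast S.ncard_add_ncard_compl
  calc prob (q0 n k) S = S.ncard / Fintype.card (Flat n k) := prob_const _ S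
    _ ≤ 1 - ((2 : ℝ) ^ k)⁻¹ := by
      have card_mul_inv_le : (Fintype.card (Flat n k) : ℝ) * ((2 : ℝ) ^ k)⁻¹ ≤ Sᶜ.ncard :=
        mul_inv_le_of_le_mul₀ (by positivity) (by positivity) compl_large
      refine div_le_of_le_mul₀ (Nat.cast_nonneg _) (one_sub_inv_two_pow_nonneg k) ?_
      linarith

end Flats

lemma card_filter_card_le (α : Type*) [Fintype α] (k : ℕ) :
    (Finset.univ.filter fun S : Finset α => S.card ≤ k).card
      = ∑ i ∈ Finset.range (k + 1), (Fintype.card α).choose i := by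
  rw [Finset.card_eq_sum_card_fiberwise (f := Finset.card) (t := Finset.range (k + 1))]
  · refine Finset.sum_congr rfl fun i hi => ?_
    rw [← Finset.card_univ, ← Finset.card_powersetCard]
    congr 1
    ext S
    grind
  · intro S hS
    grind

lemma finrank_monomialSpan_le (n k : ℕ) :
    Module.finrank (ZMod 2) (monomialSpan n k) ≤ ∑ i ∈ Finset.range (k + 1), n.choose i := by
  let monomial (S : Finset (Fin n)) (x : F2n n) : ZMod 2 := ∏ s ∈ S, x s
  let supports := Finset.univ.filter fun S : Finset (Fin n) => S.card ≤ k
  have span_eq : monomialSpan n k = Submodule.span (ZMod 2) (supports.image monomial) := by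
    rw [monomialSpan]
    congr 1
    ext f
    simp [supports, monomial, eq_comm]
  calc Module.finrank (ZMod 2) (monomialSpan n k) ≤ (supports.image monomial).card := by
        rw [span_eq]
        exact finrank_span_finset_le_card _
    _ ≤ supports.card := Finset.card_image_le
    _ = ∑ i ∈ Finset.range (k + 1), n.choose i := by
        rw [card_filter_card_le, Fintype.card_fin]

theorem stmt13_general (n k m : ℕ) (hkn : k ≤ n) (U : Submodule (ZMod 2) (F2n n → ZMod 2))
    (hconst : (fun _ => (1 : ZMod 2)) ∈ U)
    (hind : ∀ W : Flat n k, Set.indicator W.1 1 ∈ U) :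
    prob (Punif n k m)
      {V | ∃ φ : U →ₗ[ZMod 2] ZMod 2,
          φ ⟨fun _ => 1, hconst⟩ = 1 ∧ ∀ j : Fin m, φ ⟨Set.indicator (V j).1 1, hind (V j)⟩ = 0}
      ≤ (2 : ℝ) ^ Module.finrank (ZMod 2) U * (1 - ((2 : ℝ) ^ k)⁻¹) ^ m := by
  let Normalized := {φ : U →ₗ[ZMod 2] ZMod 2 // φ ⟨fun _ => 1, hconst⟩ = 1}
  have : Finite (U →ₗ[ZMod 2] ZMod 2) := Module.finite_of_finite (ZMod 2)
  have := Fintype.ofFinite (U →ₗ[ZMod 2] ZMod 2)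
  have vanishing_le (φ : Normalized) :
      prob (q0 n k) {W | φ.1 ⟨Set.indicator W.1 1, hind W⟩ = 0} ≤ 1 - ((2 : ℝ) ^ k)⁻¹ :=
    prob_q0_le_of_forall_exists_ofCoset_notMem hkn fun D =>
      exists_map_indicator_preimage_singleton_ne_zero φ.1 D.1.mkQ
        (fun c => hind (Flat.ofCoset D c)) hconst (φ.2.trans_ne one_ne_zero)
  have card_normalized_le : (Fintype.card Normalized : ℝ) ≤ 2 ^ Module.finrank (ZMod 2) U := by
    have card_functionals : Fintype.card (U →ₗ[ZMod 2] ZMod 2) = 2 ^ Module.finrank (ZMod 2) U := by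
      rw [Module.card_eq_pow_finrank (K := ZMod 2), Module.finrank_linearMap_self, ZMod.card]
    exact_mod_cast (Fintype.card_subtype_le _).trans_eq card_functionals
  have union_bound := prob_prod_exists_forall_mem_le (ι := Fin m) q0_nonneg vanishing_le
  simp only [Normalized, Subtype.exists, exists_prop, Fintype.card_fin, Set.mem_ofPred_eq]
    at union_bound
  exact union_bound.trans <|
    mul_le_mul_of_nonneg_right card_normalized_le (pow_nonneg (one_sub_inv_two_pow_nonneg k) m)

theorem stmt13 (n k m : ℕ) (hk : 1 ≤ k) (hkn : k ≤ n)
    (hconst : (fun _ => (1 : ZMod 2)) ∈ monomialSpan n k)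
    (hind : ∀ W : Flat n k, Set.indicator W.1 1 ∈ monomialSpan n k) :
    prob (Punif n k m)
      {V | ∃ φ : (monomialSpan n k) →ₗ[ZMod 2] ZMod 2,
          φ ⟨fun _ => 1, hconst⟩ = 1 ∧ ∀ j : Fin m, φ ⟨Set.indicator (V j).1 1, hind (V j)⟩ = 0}
      ≤ (2:ℝ) ^ (∑ i ∈ Finset.range (k+1), n.choose i) * (1 - ((2:ℝ)^k)⁻¹) ^ m :=
  (stmt13_general n k m hkn (monomialSpan n k) hconst hind).trans <|
    mul_le_mul_of_nonneg_right (pow_le_pow_right₀ one_le_two (finrank_monomialSpan_le n k))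
      (pow_nonneg (one_sub_inv_two_pow_nonneg k) m)
end
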